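/- arXiv:math/0304045 — 2 statements merged into one kernel-verified Lean document; each statement's English description precedes it below -/
import Mathlib

section
/- Let x be a nonzero element of H and let y be a nonzero element of Ĥ(x). If R_A(y) ≤ r_{S_u}(x^{(0)}), then the closed disc {λ ∈ ℂ : |λ| ≤ R_A(y)} is contained in σ_{S_u}(y). -/
open Filter Topology ENNReal

noncomputable section

/-- The local resolvent set of `T` at `x`. -/
def localResolventSet {E : Type*} [NormedAddCommGroup E] [NormedSpace ℂ E]
    (T : E →L[ℂ] E) (x : E) : Set ℂ :=
  {l : ℂ | ∃ U : Set ℂ, IsOpen U ∧ l ∈ U ∧ ∃ f : ℂ → E, AnalyticOnNhd ℂ f U ∧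
    ∀ m ∈ U, T (f m) - m • f m = x}

/-- The local spectrum of `T` at `x`. -/
def localSpectrum {E : Type*} [NormedAddCommGroup E] [NormedSpace ℂ E]
    (T : E →L[ℂ] E) (x : E) : Set ℂ :=
  (localResolventSet T x)ᶜ

/-- The local spectral radius of `T` at `x`: `limsup ‖Tⁿx‖^{1/n}`. -/
def localSpecRad {E : Type*} [NormedAddCommGroup E] [NormedSpace ℂ E]
    (T : E →L[ℂ] E) (x : E) : ℝ≥0∞ :=
  limsup (fun n : ℕ => (‖(T ^ n) x‖₊ : ℝ≥0∞) ^ (1 / n : ℝ)) atTop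

/-- The lower bound `m(T) = inf {‖Tx‖ : ‖x‖ = 1}` of an operator. -/
def lowerBound {E : Type*} [NormedAddCommGroup E] [NormedSpace ℂ E]
    (T : E →L[ℂ] E) : ℝ :=
  sInf ((fun x => ‖T x‖) '' {x : E | ‖x‖ = 1})

/-- `r₁(T) = lim m(Tⁿ)^{1/n} = sup_{n ≥ 1} m(Tⁿ)^{1/n}`. -/
def r1 {E : Type*} [NormedAddCommGroup E] [NormedSpace ℂ E]
    (T : E →L[ℂ] E) : ℝ≥0∞ :=
  ⨆ n : ℕ, ENNReal.ofReal (lowerBound (T ^ (n + 1))) ^ (1 / (n + 1) : ℝ)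

/-- The point spectrum: the set of eigenvalues. -/
def pointSpectrum {E : Type*} [NormedAddCommGroup E] [NormedSpace ℂ E]
    (T : E →L[ℂ] E) : Set ℂ :=
  {l : ℂ | ∃ x : E, x ≠ 0 ∧ T x = l • x}

/-- The set of points where `T` fails the single-valued extension property. -/
def svepFails {E : Type*} [NormedAddCommGroup E] [NormedSpace ℂ E]
    (T : E →L[ℂ] E) : Set ℂ :=
  {l₀ : ℂ | ¬ ∀ r : ℝ, 0 < r → ∀ f : ℂ → E, AnalyticOnNhd ℂ f (Metric.ball l₀ r) →
      (∀ m ∈ Metric.ball l₀ r, T (f m) - m • f m = 0) →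
      ∀ m ∈ Metric.ball l₀ r, f m = 0}

/-- Dunford's condition (C). -/
def DunfordC {E : Type*} [NormedAddCommGroup E] [NormedSpace ℂ E]
    (T : E →L[ℂ] E) : Prop :=
  ∀ F : Set ℂ, IsClosed F → IsClosed {y : E | localSpectrum T y ⊆ F}

/-- Bishop's property (β). -/
def BishopBeta {E : Type*} [NormedAddCommGroup E] [NormedSpace ℂ E]
    (T : E →L[ℂ] E) : Prop :=
  ∀ U : Set ℂ, IsOpen U → ∀ f : ℕ → ℂ → E,
    (∀ m, AnalyticOnNhd ℂ (f m) U) →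
    TendstoLocallyUniformlyOn (fun m z => T (f m z) - z • f m z) 0 atTop U →
    TendstoLocallyUniformlyOn f 0 atTop U

section Shift

variable {H : Type*} [NormedAddCommGroup H] [InnerProductSpace ℂ H] [CompleteSpace H]

/-- `wB A n = B_n = A_{n-1} ⋯ A_1 A_0`, with `B_0 = 1`. -/
def wB (A : ℕ → (H →L[ℂ] H)ˣ) : ℕ → (H →L[ℂ] H)ˣ
  | 0 => 1
  | n + 1 => A n * wB A n

/-- `wBi A n = B_n⁻¹` as an operator. -/
def wBi (A : ℕ → (H →L[ℂ] H)ˣ) (n : ℕ) : H →L[ℂ] H :=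
  (((wB A n)⁻¹ : (H →L[ℂ] H)ˣ) : H →L[ℂ] H)

/-- `R₂⁺(S_u) = sup_{x ≠ 0} 1 / limsup ‖(B_n*)⁻¹ x‖^{1/n}` (with `1/0 = ∞`). -/
def R2plus (A : ℕ → (H →L[ℂ] H)ˣ) : ℝ≥0∞ :=
  ⨆ (x : H) (_ : x ≠ 0),
    (limsup (fun n : ℕ =>
      (‖ContinuousLinearMap.adjoint (wBi A n) x‖₊ : ℝ≥0∞) ^ (1 / n : ℝ)) atTop)⁻¹

/-- `R₂⁻(S_u) = inf_{x ≠ 0} 1 / limsup ‖(B_n*)⁻¹ x‖^{1/n}` (with `1/0 = ∞`). -/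
def R2minus (A : ℕ → (H →L[ℂ] H)ˣ) : ℝ≥0∞ :=
  ⨅ (x : H) (_ : x ≠ 0),
    (limsup (fun n : ℕ =>
      (‖ContinuousLinearMap.adjoint (wBi A n) x‖₊ : ℝ≥0∞) ^ (1 / n : ℝ)) atTop)⁻¹

/-- `R₃⁺(S_u) = sup_{x ≠ 0} limsup ‖B_n x‖^{1/n}`. -/
def R3plus (A : ℕ → (H →L[ℂ] H)ˣ) : ℝ≥0∞ :=
  ⨆ (x : H) (_ : x ≠ 0),
    limsup (fun n : ℕ => (‖(wB A n : H →L[ℂ] H) x‖₊ : ℝ≥0∞) ^ (1 / n : ℝ)) atTop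

/-- `R₃⁻(S_u) = inf_{x ≠ 0} limsup ‖B_n x‖^{1/n}`. -/
def R3minus (A : ℕ → (H →L[ℂ] H)ˣ) : ℝ≥0∞ :=
  ⨅ (x : H) (_ : x ≠ 0),
    limsup (fun n : ℕ => (‖(wB A n : H →L[ℂ] H) x‖₊ : ℝ≥0∞) ^ (1 / n : ℝ)) atTop

/-- `r₂(S_u) = 1 / limsup ‖B_n⁻¹‖^{1/n}` (with `1/0 = ∞`). -/
def r2 (A : ℕ → (H →L[ℂ] H)ˣ) : ℝ≥0∞ :=
  (limsup (fun n : ℕ => (‖wBi A n‖₊ : ℝ≥0∞) ^ (1 / n : ℝ)) atTop)⁻¹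

/-- `r₃(S_u) = 1 / liminf ‖B_n⁻¹‖^{1/n}` (with `1/0 = ∞`). -/
def r3 (A : ℕ → (H →L[ℂ] H)ˣ) : ℝ≥0∞ :=
  (liminf (fun n : ℕ => (‖wBi A n‖₊ : ℝ≥0∞) ^ (1 / n : ℝ)) atTop)⁻¹

/-- `R_𝒜(x) = 1 / limsup ‖B_n⁻¹ x_n‖^{1/n}` (with `1/0 = ∞`). -/
def RA (A : ℕ → (H →L[ℂ] H)ˣ) (x : lp (fun _ : ℕ => H) 2) : ℝ≥0∞ :=
  (limsup (fun n : ℕ => (‖wBi A n (x n)‖₊ : ℝ≥0∞) ^ (1 / n : ℝ)) atTop)⁻¹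

end Shift

section Aux

lemma aux_root_le {a s : NNReal} {n : ℕ} (hn : n ≠ 0) :
    ((a : ℝ≥0∞) ^ (1 / n : ℝ) ≤ (s : ℝ≥0∞)) ↔ a ≤ s ^ n := by
  have hn' : (0 : ℝ) < n := by positivity
  rw [one_div, ENNReal.rpow_inv_le_iff hn', ENNReal.rpow_natCast]
  exact_mod_cast Iff.rfl

lemma aux_bound {H : Type*} [NormedAddCommGroup H] (v : ℕ → H) (s : NNReal) (hs : s ≠ 0)
    (h : (s : ℝ≥0∞) < (limsup (fun n : ℕ => (‖v n‖₊ : ℝ≥0∞) ^ (1 / n : ℝ)) atTop)⁻¹) :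
    ∀ᶠ n in atTop, ‖v n‖ * (s : ℝ) ^ n ≤ 1 := by
  rw [ENNReal.lt_inv_iff_lt_inv] at h
  have h2 := eventually_lt_of_limsup_lt h
  filter_upwards [h2, eventually_ne_atTop 0] with n hn hn0
  have h3 := hn.le
  rw [← ENNReal.coe_inv hs, aux_root_le hn0] at h3
  have h4 : ‖v n‖₊ * s ^ n ≤ 1 := by
    calc ‖v n‖₊ * s ^ n ≤ (s⁻¹) ^ n * s ^ n := by gcongr
      _ = 1 := by rw [← mul_pow, inv_mul_cancel₀ hs, one_pow]
  exact_mod_cast h4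

lemma aux_limsup {H : Type*} [NormedAddCommGroup H] (v : ℕ → H) (K q : ℝ) (s : NNReal)
    (hq : 0 ≤ q) (hqs : q < s) (h : ∀ᶠ n in atTop, ‖v n‖ ≤ K * q ^ n) :
    limsup (fun n : ℕ => (‖v n‖₊ : ℝ≥0∞) ^ (1 / n : ℝ)) atTop ≤ s := by
  have hs : (0 : ℝ) < s := lt_of_le_of_lt hq hqs
  refine limsup_le_of_le (by isBoundedDefault) ?_
  have ht : Tendsto (fun n : ℕ => K * (q / s) ^ n) atTop (𝓝 (K * 0)) :=
    (tendsto_pow_atTop_nhds_zero_of_lt_one (by positivity) ((div_lt_one hs).2 hqs)).const_mul K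
  rw [mul_zero] at ht
  filter_upwards [h, ht.eventually_le_const one_pos, eventually_ne_atTop 0] with n h1 h2 h3
  rw [aux_root_le h3]
  have : ‖v n‖ ≤ (s : ℝ) ^ n := by
    refine h1.trans ?_
    rw [div_pow, mul_div_assoc', div_le_one (by positivity)] at h2
    exact h2
  exact_mod_cast this

/-- nonvanishing of a nonzero power series close to a point -/
lemma aux_series (a : ℕ → ℂ) (ha : a ≠ 0) (s : NNReal)
    (hb : ∀ᶠ n in atTop, ‖a n‖ * (s : ℝ) ^ n ≤ 1 ) (m₀ : ℂ) (hm : ‖m₀‖ < s) :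
    ∀ᶠ m in 𝓝[≠] m₀, ∃ p : ℂ, p ≠ 0 ∧
      Tendsto (fun n => ∑ k ∈ Finset.range n, a k * m ^ k) atTop (𝓝 p) := by
  set P := FormalMultilinearSeries.ofScalars ℂ a with hP
  have hr : (s : ℝ≥0∞) ≤ P.radius := by
    refine P.le_radius_of_isBigO ?_
    refine Asymptotics.IsBigO.of_bound 1 ?_
    filter_upwards [hb] with n hn
    rw [hP, FormalMultilinearSeries.ofScalars_norm]
    rw [Real.norm_of_nonneg (by positivity)]
    simpa using hn
  have hs : (0 : ℝ≥0∞) < s := by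
    have := lt_of_le_of_lt (norm_nonneg _) hm
    exact_mod_cast this
  have hF : HasFPowerSeriesOnBall P.sum P 0 s :=
    (P.hasFPowerSeriesOnBall (hs.trans_le hr)).mono hs hr
  have hball : Metric.eball (0 : ℂ) (s : ℝ≥0∞) = Metric.ball 0 s := Metric.eball_coe
  have hA : AnalyticOnNhd ℂ P.sum (Metric.ball 0 s) := by
    rw [← hball]; exact hF.analyticOnNhd
  have hm0 : m₀ ∈ Metric.ball (0 : ℂ) s := by simpa using hm
  have key : ∀ᶠ m in 𝓝[≠] m₀, P.sum m ≠ 0 := by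
    by_contra hcon
    have hfr : ∃ᶠ m in 𝓝[≠] m₀, P.sum m = 0 := by
      intro hev
      exact hcon hev
    have h0 := hA.eqOn_zero_of_preconnected_of_frequently_eq_zero
      (convex_ball _ _).isPreconnected hm0 hfr
    have hz : P.sum =ᶠ[𝓝 0] 0 := by
      refine h0.eventuallyEq_of_mem (Metric.ball_mem_nhds _ (by exact_mod_cast hs))
    have hP0 : P = 0 := (hF.hasFPowerSeriesAt.congr hz).eq_zero
    rw [hP, FormalMultilinearSeries.ofScalars_series_eq_zero] at hP0
    exact ha hP0
  have hin : ∀ᶠ m in 𝓝[≠] m₀, m ∈ Metric.ball (0 : ℂ) s :=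
    mem_nhdsWithin_of_mem_nhds (Metric.isOpen_ball.mem_nhds hm0)
  filter_upwards [key, hin] with m h1 h2
  refine ⟨P.sum m, h1, ?_⟩
  rw [← hball] at h2
  have := (hF.hasSum h2).tendsto_sum_nat
  simpa [hP, FormalMultilinearSeries.ofScalars_apply_eq, mul_comm] using this

variable {H : Type*} [NormedAddCommGroup H] [InnerProductSpace ℂ H] [CompleteSpace H]

lemma aux_wBi (A : ℕ → (H →L[ℂ] H)ˣ) (n : ℕ) (x : H) :
    wBi A n ((wB A n : H →L[ℂ] H) x) = x := by
  have : (wBi A n) * (wB A n : H →L[ℂ] H) = 1 := Units.inv_mul _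
  simpa using congrArg (fun T : H →L[ℂ] H => T x) this

lemma aux_cont (n : ℕ) : Continuous (fun z : lp (fun _ : ℕ => H) 2 => z n) :=
  (LipschitzWith.of_dist_le_mul (K := 1) (fun z w => by
    simpa [dist_eq_norm] using lp.norm_apply_le_norm (by norm_num) (z - w) n)).continuous

lemma aux_coef (A : ℕ → (H →L[ℂ] H)ˣ) (x : H) (y : lp (fun _ : ℕ => H) 2)
    (hy : y ∈ (Submodule.span ℂ
      (Set.range fun n : ℕ => lp.single 2 n ((wB A n : H →L[ℂ] H) x))).topologicalClosure)
    (n : ℕ) : ∃ a : ℂ, y n = a • (wB A n : H →L[ℂ] H) x := by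
  let L : lp (fun _ : ℕ => H) 2 →ₗ[ℂ] H :=
    { toFun := fun z => z n, map_add' := fun _ _ => rfl, map_smul' := fun _ _ => rfl }
  let M := (Submodule.span ℂ {(wB A n : H →L[ℂ] H) x}).comap L
  have hM : IsClosed (M : Set (lp (fun _ : ℕ => H) 2)) :=
    (Submodule.closed_of_finiteDimensional
      (Submodule.span ℂ {(wB A n : H →L[ℂ] H) x})).preimage (aux_cont n)
  have hsub : Submodule.span ℂ
      (Set.range fun n : ℕ => lp.single 2 n ((wB A n : H →L[ℂ] H) x)) ≤ M := by
    refine Submodule.span_le.2 ?_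
    rintro _ ⟨k, rfl⟩
    change (lp.single 2 k ((wB A k : H →L[ℂ] H) x) : lp (fun _ : ℕ => H) 2) n ∈
      Submodule.span ℂ {(wB A n : H →L[ℂ] H) x}
    by_cases h : n = k
    · subst h
      rw [lp.single_apply_self]
      exact Submodule.mem_span_singleton_self _
    · rw [lp.single_apply_ne _ _ _ h]
      exact Submodule.zero_mem _
  have hle := Submodule.topologicalClosure_minimal _ hsub hM
  have h := hle hy
  obtain ⟨a, ha⟩ := Submodule.mem_span_singleton.1 (show y n ∈ _ from h)
  exact ⟨a, ha.symm⟩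

lemma aux_pow (A : ℕ → (H →L[ℂ] H)ˣ)
    (S : lp (fun _ : ℕ => H) 2 →L[ℂ] lp (fun _ : ℕ => H) 2)
    (hS0 : ∀ x : lp (fun _ : ℕ => H) 2, S x 0 = 0)
    (hS : ∀ (x : lp (fun _ : ℕ => H) 2) (n : ℕ), S x (n + 1) = (A n : H →L[ℂ] H) (x n))
    (x : H) (n : ℕ) :
    (S ^ n) (lp.single 2 0 x) = lp.single 2 n ((wB A n : H →L[ℂ] H) x) := by
  induction n with
  | zero => simp [wB]
  | succ n ih =>
    rw [pow_succ', mul_apply_eq_comp, ih]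
    ext k
    cases k with
    | zero => rw [hS0, lp.single_apply_ne _ _ _ (by omega)]
    | succ k =>
      rw [hS]
      by_cases h : k = n
      · subst h
        rw [lp.single_apply_self, lp.single_apply_self]
        simp [wB]
      · rw [lp.single_apply_ne _ _ _ h, lp.single_apply_ne _ _ _ (by omega), map_zero]

lemma aux_rec (A : ℕ → (H →L[ℂ] H)ˣ)
    (S : lp (fun _ : ℕ => H) 2 →L[ℂ] lp (fun _ : ℕ => H) 2)
    (hS0 : ∀ x : lp (fun _ : ℕ => H) 2, S x 0 = 0)
    (hS : ∀ (x : lp (fun _ : ℕ => H) 2) (n : ℕ), S x (n + 1) = (A n : H →L[ℂ] H) (x n))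
    (x : H) (y : lp (fun _ : ℕ => H) 2) (a : ℕ → ℂ)
    (ha : ∀ n, y n = a n • (wB A n : H →L[ℂ] H) x) (m : ℂ) (g : lp (fun _ : ℕ => H) 2)
    (hg : S g - m • g = y) (n : ℕ) :
    m ^ (n + 1) • g n = -((∑ k ∈ Finset.range (n + 1), a k * m ^ k) •
      (wB A n : H →L[ℂ] H) x) := by
  have hc : ∀ k, S g k - m • g k = a k • (wB A k : H →L[ℂ] H) x := by
    intro k
    rw [← ha, ← hg]; rfl
  induction n with
  | zero =>
    have := hc 0
    rw [hS0, zero_sub] at this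
    simp [← this]
  | succ n ih =>
    have h := hc (n + 1)
    rw [hS] at h
    have h1 : m • g (n + 1) = (A n : H →L[ℂ] H) (g n) - a (n + 1) •
        (wB A (n + 1) : H →L[ℂ] H) x := by rw [← h]; abel
    have h2 : (wB A (n + 1) : H →L[ℂ] H) x = (A n : H →L[ℂ] H) ((wB A n : H →L[ℂ] H) x) := by
      simp [wB]
    rw [pow_succ, mul_smul, h1, smul_sub, ← map_smul, ih, map_neg, map_smul, ← h2,
      Finset.sum_range_succ _ (n + 1), add_smul, smul_smul, mul_comm (m ^ (n + 1))]
    abel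

end Aux

theorem stmt17 {H : Type*} [NormedAddCommGroup H] [InnerProductSpace ℂ H] [CompleteSpace H]
    (A : ℕ → (H →L[ℂ] H)ˣ)
    (hbdd : ∃ C : ℝ, ∀ n, ‖(A n : H →L[ℂ] H)‖ ≤ C)
    (S : lp (fun _ : ℕ => H) 2 →L[ℂ] lp (fun _ : ℕ => H) 2)
    (hS0 : ∀ x : lp (fun _ : ℕ => H) 2, S x 0 = 0)
    (hS : ∀ (x : lp (fun _ : ℕ => H) 2) (n : ℕ), S x (n + 1) = (A n : H →L[ℂ] H) (x n))
    (x : H) (hx : x ≠ 0) (y : lp (fun _ : ℕ => H) 2) (hy0 : y ≠ 0)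
    (hy : y ∈ (Submodule.span ℂ
      (Set.range fun n : ℕ => lp.single 2 n ((wB A n : H →L[ℂ] H) x))).topologicalClosure)
    (hR : RA A y ≤ localSpecRad S (lp.single 2 0 x)) :
    {l : ℂ | (‖l‖₊ : ℝ≥0∞) ≤ RA A y} ⊆ localSpectrum S y := by
  intro l hl
  change (‖l‖₊ : ℝ≥0∞) ≤ RA A y at hl
  rintro ⟨U, hU, hlU, f, hf, hfe⟩
  choose a ha using aux_coef A x y hy
  have hBx : ∀ n, (wB A n : H →L[ℂ] H) x ≠ 0 := by
    intro n h
    apply hx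
    rw [← aux_wBi A n x, h, map_zero]
  have ha0 : a ≠ 0 := by
    rintro rfl
    apply hy0
    ext n
    rw [ha]; simp
  have hrec : ∀ m ∈ U, ∀ n, m ^ (n + 1) • f m n =
      -((∑ k ∈ Finset.range (n + 1), a k * m ^ k) • (wB A n : H →L[ℂ] H) x) :=
    fun m hm n => aux_rec A S hS0 hS x y a ha m (f m) (hfe m hm) n
  by_cases hl0 : l = 0
  · subst hl0
    apply ha0
    funext n
    induction n using Nat.strong_induction_on with
    | _ n ih =>
      have hcont : ContinuousAt (fun m => m • f m n) 0 :=
        continuousAt_id.smul ((aux_cont n).continuousAt.comp (hf 0 hlU).continuousAt)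
      have h1 : Tendsto (fun m : ℂ => m • f m n) (𝓝[≠] 0) (𝓝 0) := by
        have := hcont.tendsto.mono_left (nhdsWithin_le_nhds (s := {0}ᶜ))
        simpa using this
      have h2 : (fun m : ℂ => m • f m n) =ᶠ[𝓝[≠] 0]
          fun _ => -(a n • (wB A n : H →L[ℂ] H) x) := by
        filter_upwards [self_mem_nhdsWithin, mem_nhdsWithin_of_mem_nhds (hU.mem_nhds hlU)]
          with m hm hmU
        have hm : m ≠ 0 := hm
        have h3 := hrec m hmU n
        rw [Finset.sum_range_succ, Finset.sum_eq_zero, zero_add, pow_succ, mul_smul,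
          mul_comm, mul_smul, ← smul_neg] at h3
        · exact smul_right_injective H (pow_ne_zero n hm) h3
        · intro k hk
          rw [ih k (Finset.mem_range.1 hk)]; simp
      have h4 := tendsto_nhds_unique (h1.congr' h2) tendsto_const_nhds
      have h5 : a n • (wB A n : H →L[ℂ] H) x = 0 := by
        simpa using h4.symm
      exact (smul_eq_zero.1 h5).resolve_right (hBx n)
  · have hlpos : 0 < ‖l‖ := norm_pos_iff.2 hl0
    obtain ⟨t, ht0, ht1, htU⟩ : ∃ t : ℝ, 0 < t ∧ t < 1 ∧ (t : ℂ) * l ∈ U := by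
      have hc : Tendsto (fun t : ℝ => (t : ℂ) * l) (𝓝[<] 1) (𝓝 l) := by
        have : ContinuousAt (fun t : ℝ => (t : ℂ) * l) 1 := by fun_prop
        simpa using this.tendsto.mono_left (nhdsWithin_le_nhds (s := Set.Iio 1))
      have e1 := hc.eventually (hU.mem_nhds hlU)
      have e2 : ∀ᶠ t : ℝ in 𝓝[<] 1, 0 < t :=
        mem_nhdsWithin_of_mem_nhds (Ioi_mem_nhds one_pos)
      have e3 : ∀ᶠ t : ℝ in 𝓝[<] 1, t < 1 := self_mem_nhdsWithin
      obtain ⟨t, h1, h2, h3⟩ := (e1.and (e2.and e3)).exists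
      exact ⟨t, h2, h3, h1⟩
    set m₀ : ℂ := t * l with hm₀
    have hm₀l : ‖m₀‖ < ‖l‖ := by
      rw [hm₀, norm_mul, Complex.norm_real, Real.norm_of_nonneg ht0.le]
      nlinarith
    have hm₀0 : m₀ ≠ 0 := mul_ne_zero (by exact_mod_cast ht0.ne') hl0
    obtain ⟨s', hs1, hs2⟩ := exists_between hm₀l
    have hs'0 : 0 < s' := (norm_nonneg _).trans_lt hs1
    lift s' to NNReal using hs'0.le with s
    have hs0 : s ≠ 0 := by rintro rfl; simp at hs'0
    have hsR : (s : ℝ≥0∞) < RA A y := by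
      refine lt_of_lt_of_le ?_ hl
      exact_mod_cast hs2
    have hb := aux_bound _ s hs0 hsR
    have hb2 : ∀ᶠ n in atTop, ‖(a n * (‖x‖ : ℂ))‖ * (s : ℝ) ^ n ≤ 1 := by
      filter_upwards [hb] with n hn
      rw [ha, map_smul, aux_wBi, norm_smul] at hn
      simpa using hn
    have hxn : (‖x‖ : ℂ) ≠ 0 := by simpa using hx
    have hser := aux_series (fun n => a n * (‖x‖ : ℂ)) (by
      intro h; apply ha0; funext n
      have := congrFun h n
      exact (mul_eq_zero.1 this).resolve_right hxn) s hb2 m₀ hs1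
    have e1 : ∀ᶠ m in 𝓝[≠] m₀, m ∈ U := mem_nhdsWithin_of_mem_nhds (hU.mem_nhds htU)
    have e2 : ∀ᶠ m in 𝓝[≠] m₀, ‖m‖ < s :=
      mem_nhdsWithin_of_mem_nhds (continuous_norm.continuousAt.eventually_lt_const hs1)
    obtain ⟨m, ⟨p, hp, hlim⟩, hmU, hms⟩ := (hser.and (e1.and e2)).exists
    have hlim2 := (hlim.comp (tendsto_add_atTop_nat 1)).norm
    have hpp : 0 < ‖p‖ := norm_pos_iff.2 hp
    have hev := hlim2.eventually_const_le (half_lt_self hpp)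
    have hxpos : 0 < ‖x‖ := norm_pos_iff.2 hx
    have hbound : ∀ᶠ n in atTop, ‖(S ^ n) (lp.single 2 0 x)‖ ≤
        (‖x‖ * ‖m‖ * ‖f m‖ / (‖p‖ / 2)) * ‖m‖ ^ n := by
      filter_upwards [hev] with n hn
      rw [aux_pow A S hS0 hS, lp.norm_single (by norm_num)]
      have h1 := congrArg norm (hrec m hmU n)
      rw [norm_neg, norm_smul, norm_smul, norm_pow] at h1
      have h2 : ‖∑ k ∈ Finset.range (n + 1), a k * (‖x‖ : ℂ) * m ^ k‖ =
          ‖x‖ * ‖∑ k ∈ Finset.range (n + 1), a k * m ^ k‖ := by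
        rw [← Real.norm_of_nonneg (norm_nonneg x), ← Complex.norm_real ‖x‖, ← norm_mul,
          Finset.mul_sum]
        congr 1
        refine Finset.sum_congr rfl fun k _ => ?_
        simp only [norm_norm, Complex.norm_real]
        ring
      simp only [Function.comp_apply] at hn
      rw [h2] at hn
      have h3 : ‖f m n‖ ≤ ‖f m‖ := lp.norm_apply_le_norm (by norm_num) _ _
      rw [div_mul_eq_mul_div, le_div_iff₀ (by positivity)]
      calc ‖(wB A n : H →L[ℂ] H) x‖ * (‖p‖ / 2)
          ≤ ‖(wB A n : H →L[ℂ] H) x‖ * (‖x‖ * ‖∑ k ∈ Finset.range (n + 1), a k * m ^ k‖) := by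
            gcongr
        _ = ‖x‖ * (‖m‖ ^ (n + 1) * ‖f m n‖) := by rw [h1]; ring
        _ ≤ ‖x‖ * (‖m‖ ^ (n + 1) * ‖f m‖) := by gcongr
        _ = _ := by ring
    have hfin := aux_limsup _ _ _ s (norm_nonneg m) hms hbound
    exact absurd (hsR.trans_le (hR.trans hfin)) (lt_irrefl _)
end
end

section
/- If S_u satisfies Dunford's condition (C), then r(S_u) = R₃⁺(S_u), and moreover for every nonzero x ∈ H, limsup_{n→∞} ‖B_n x‖^{1/n} = lim_{n→∞} [sup_{k≥0} ‖B_{n+k}x‖/‖B_k x‖]^{1/n}. -/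
open Filter Topology ENNReal

noncomputable section

open scoped NNReal

theorem aux_le_of_nnreal {a b : ℝ≥0∞} (h : ∀ R : ℝ≥0, a < R → b ≤ R) : b ≤ a := by
  refine le_of_forall_gt_imp_ge_of_dense fun c hc => ?_
  induction c with
  | top => exact le_top
  | coe c => exact h c hc

theorem aux_limsup_le {a : ℕ → ℝ≥0∞} {C R : ℝ≥0} (h : ∀ n, a n ≤ (C : ℝ≥0∞) * (R : ℝ≥0∞) ^ n) :
    limsup (fun n : ℕ => a n ^ (1 / n : ℝ)) atTop ≤ R := by
  have h1 : Tendsto (fun n : ℕ => (((C : ℝ) + 1) ^ (1 / n : ℝ)) * (R : ℝ)) atTop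
      (𝓝 (1 * R)) := by
    refine Tendsto.mul_const _ ?_
    have : Tendsto (fun n : ℕ => (1 / n : ℝ)) atTop (𝓝 0) := tendsto_one_div_atTop_nhds_zero_nat
    have h2 := (tendsto_const_nhds (x := (C : ℝ) + 1)).rpow this
      (Or.inl (by positivity))
    simpa using h2
  have h2 : Tendsto (fun n : ℕ => (((C + 1 : ℝ≥0) : ℝ≥0∞) ^ (1 / n : ℝ)) * (R : ℝ≥0∞)) atTop
      (𝓝 (R : ℝ≥0∞)) := by
    have h3 : Tendsto (fun n : ℕ => ((C + 1 : ℝ≥0) ^ (1 / n : ℝ)) * R) atTop (𝓝 R) := by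
      rw [← NNReal.tendsto_coe]
      simpa using h1
    have h4 := ENNReal.tendsto_coe.2 h3
    refine h4.congr fun n => ?_
    rw [ENNReal.coe_mul, ENNReal.coe_rpow_of_nonneg _ (by positivity)]
  rw [← h2.limsup_eq]
  refine limsup_le_limsup ?_
  filter_upwards [eventually_gt_atTop 0] with n hn
  have hn' : (n : ℝ) ≠ 0 := by positivity
  calc a n ^ (1 / n : ℝ) ≤ (((C + 1 : ℝ≥0) : ℝ≥0∞) * (R : ℝ≥0∞) ^ n) ^ (1 / n : ℝ) := by
        refine ENNReal.rpow_le_rpow ((h n).trans ?_) (by positivity)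
        gcongr
        simp
    _ = _ := by
        rw [ENNReal.mul_rpow_of_nonneg _ _ (by positivity), ← ENNReal.rpow_natCast,
          ← ENNReal.rpow_mul, mul_one_div_cancel hn', ENNReal.rpow_one]

theorem aux_bound_s18 {a : ℕ → ℝ≥0} {R : ℝ≥0}
    (h : limsup (fun n : ℕ => (a n : ℝ≥0∞) ^ (1 / n : ℝ)) atTop < R) :
    ∃ C : ℝ≥0, ∀ n, a n ≤ C * R ^ n := by
  have hR : 0 < R := by
    have := (zero_le).trans_lt h
    exact_mod_cast this
  have h1 := eventually_lt_of_limsup_lt h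
  obtain ⟨N, hN⟩ := eventually_atTop.1 h1
  refine ⟨1 + ∑ i ∈ Finset.range (N + 1), a i / R ^ i, fun n => ?_⟩
  have hRn : 0 < R ^ n := pow_pos hR n
  rw [← div_le_iff₀ hRn]
  by_cases hn : n < N + 1
  · have := Finset.single_le_sum (f := fun i => a i / R ^ i) (fun i _ => zero_le)
      (Finset.mem_range.2 hn)
    exact this.trans (le_add_of_nonneg_left zero_le_one)
  · have hn0 : (n : ℝ) ≠ 0 := by
      have : 0 < n := by omega
      positivity
    have h2 := (hN n (by omega)).le
    have h3 := ENNReal.rpow_le_rpow (z := n) h2 (by positivity)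
    rw [← ENNReal.rpow_mul, one_div_mul_cancel hn0, ENNReal.rpow_one, ENNReal.rpow_natCast] at h3
    have h4 : a n ≤ R ^ n := by exact_mod_cast h3
    calc a n / R ^ n ≤ 1 := div_le_one_of_le₀ h4 zero_le
      _ ≤ _ := le_add_of_nonneg_right zero_le

section Abs
variable {E : Type*} [NormedAddCommGroup E] [NormedSpace ℂ E]

/-- Vectors whose orbit grows at most like `R^n` for all `R > r`. -/
def growthSub (T : E →L[ℂ] E) (r : ℝ≥0) : Submodule ℂ E where
  carrier := {y | ∀ R : ℝ≥0, r < R → ∃ C : ℝ, ∀ n, ‖(T ^ n) y‖ ≤ C * (R : ℝ) ^ n}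
  add_mem' := by
    intro a b ha hb R hR
    obtain ⟨C, hC⟩ := ha R hR
    obtain ⟨D, hD⟩ := hb R hR
    refine ⟨C + D, fun n => ?_⟩
    rw [map_add, add_mul]
    exact (norm_add_le _ _).trans (add_le_add (hC n) (hD n))
  zero_mem' := fun R _ => ⟨0, fun n => by simp⟩
  smul_mem' := by
    intro c a ha R hR
    obtain ⟨C, hC⟩ := ha R hR
    refine ⟨‖c‖ * C, fun n => ?_⟩
    rw [map_smul, norm_smul, mul_assoc]
    exact mul_le_mul_of_nonneg_left (hC n) (norm_nonneg _)

variable [CompleteSpace E]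

theorem aux_ub (T : E →L[ℂ] E) (r : ℝ≥0) (hcl : IsClosed (growthSub T r : Set E)) (R : ℝ≥0)
    (hR : r < R) : ∃ C : ℝ≥0, ∀ n, ∀ y ∈ growthSub T r, ‖(T ^ n) y‖ ≤ C * (R : ℝ) ^ n * ‖y‖ := by
  have hR0 : (0 : ℝ) < R := r.2.trans_lt hR
  have : CompleteSpace (growthSub T r) := hcl.completeSpace_coe
  obtain ⟨C, hC⟩ := banach_steinhaus
    (g := fun n : ℕ => (((R : ℂ) ^ n)⁻¹) • ((T ^ n).comp (growthSub T r).subtypeL)) (by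
      intro y
      obtain ⟨C, hC⟩ := y.2 R hR
      refine ⟨C, fun n => ?_⟩
      have := hC n
      simp only [smul_apply, ContinuousLinearMap.comp_apply,
        Submodule.subtypeL_apply, norm_smul, norm_inv, norm_pow]
      rw [show ‖(R : ℂ)‖ = (R : ℝ) by simp, inv_mul_le_iff₀ (by positivity), mul_comm]
      exact this)
  refine ⟨C.toNNReal, fun n y hy => ?_⟩
  have h1 := ((((R : ℂ) ^ n)⁻¹) • ((T ^ n).comp (growthSub T r).subtypeL)).le_of_opNorm_le
    (hC n) ⟨y, hy⟩
  simp only [smul_apply, ContinuousLinearMap.comp_apply,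
        Submodule.subtypeL_apply, norm_smul, norm_inv, norm_pow] at h1
  rw [show ‖(R : ℂ)‖ = (R : ℝ) by simp, inv_mul_le_iff₀ (by positivity)] at h1
  refine h1.trans ?_
  have h2 : ‖(⟨y, hy⟩ : growthSub T r)‖ = ‖y‖ := rfl
  rw [h2]
  have : C ≤ C.toNNReal := Real.le_coe_toNNReal C
  calc (R : ℝ) ^ n * (C * ‖y‖) ≤ (R : ℝ) ^ n * (C.toNNReal * ‖y‖) := by gcongr
    _ = _ := by ring

theorem aux_a (T : E →L[ℂ] E) (r : ℝ≥0) {y : E} (hy : y ∈ growthSub T r) :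
    localSpectrum T y ⊆ Metric.closedBall 0 r := by
  intro l hl
  by_contra hlr
  apply hl
  have hlr : (r : ℝ) < ‖l‖ := by simpa using hlr
  obtain ⟨R₁, h1, h1'⟩ := exists_between (show r < ‖l‖₊ from hlr)
  obtain ⟨R₂, h2, h2'⟩ := exists_between h1'
  have hR2 : (0 : ℝ) < R₂ := R₁.2.trans_lt h2
  obtain ⟨C, hC⟩ := hy R₁ h1
  have hU : IsOpen {m : ℂ | (R₂ : ℝ) < ‖m‖} := isOpen_lt continuous_const continuous_norm
  have hsum : Summable fun n : ℕ => (R₂ : ℝ)⁻¹ * C * ((R₁ : ℝ) / R₂) ^ n := by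
    refine Summable.mul_left _ (summable_geometric_of_lt_one (by positivity) ?_)
    rw [div_lt_one hR2]; exact h2
  have hle : ∀ (i : ℕ) (w : ℂ), w ∈ {m : ℂ | (R₂ : ℝ) < ‖m‖} →
      ‖(w⁻¹ ^ (i + 1)) • (T ^ i) y‖ ≤ (R₂ : ℝ)⁻¹ * C * ((R₁ : ℝ) / R₂) ^ i := by
    intro i w hw
    rw [norm_smul, norm_pow, norm_inv]
    have h3 : ‖w‖⁻¹ ≤ (R₂ : ℝ)⁻¹ := inv_anti₀ hR2 (le_of_lt hw)
    calc ‖w‖⁻¹ ^ (i + 1) * ‖(T ^ i) y‖ ≤ (R₂ : ℝ)⁻¹ ^ (i + 1) * (C * R₁ ^ i) := by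
          gcongr
          exact hC i
      _ = _ := by rw [div_eq_mul_inv, mul_pow]; ring
  refine ⟨{m : ℂ | (R₂ : ℝ) < ‖m‖}, hU, h2', fun w => -∑' n : ℕ, (w⁻¹ ^ (n + 1)) • (T ^ n) y,
    ?_, ?_⟩
  · rw [Complex.analyticOnNhd_iff_differentiableOn hU]
    refine DifferentiableOn.fun_neg (Complex.differentiableOn_tsum_of_summable_norm hsum ?_ hU hle)
    intro i w hw
    have hw0 : w ≠ 0 := by
      rintro rfl
      simp at hw
    exact (((differentiableAt_inv hw0).pow _).smul_const _).differentiableWithinAt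
  · intro w hw
    have hw0 : w ≠ 0 := by
      rintro rfl
      simp at hw
    have hs : Summable fun n : ℕ => (w⁻¹ ^ (n + 1)) • (T ^ n) y :=
      Summable.of_norm_bounded hsum fun i => hle i w hw
    have h4 : T (∑' n : ℕ, (w⁻¹ ^ (n + 1)) • (T ^ n) y)
        = ∑' n : ℕ, (w⁻¹ ^ (n + 1)) • (T ^ (n + 1)) y := by
      rw [T.map_tsum hs]
      refine tsum_congr fun n => ?_
      rw [map_smul, pow_succ' T]; rfl
    have hs0 : Summable fun n : ℕ => (w⁻¹ ^ n) • (T ^ n) y := by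
      refine (hs.const_smul w).congr fun n => ?_
      rw [smul_smul, pow_succ']
      congr 1
      field_simp
    have h5 : w • (∑' n : ℕ, (w⁻¹ ^ (n + 1)) • (T ^ n) y)
        = ∑' n : ℕ, (w⁻¹ ^ n) • (T ^ n) y := by
      rw [← tsum_const_smul'' w]
      refine tsum_congr fun n => ?_
      rw [smul_smul, pow_succ']
      congr 1
      field_simp
    have h6 := hs0.tsum_eq_zero_add
    simp only [map_neg, smul_neg, h4, h5, h6]
    simp

theorem aux_b (T : E →L[ℂ] E) (hinj : ∀ m : ℂ, ∀ x : E, T x = m • x → x = 0) (r : ℝ≥0) {y : E}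
    (hy : localSpectrum T y ⊆ Metric.closedBall 0 r) : y ∈ growthSub T r := by
  intro R hR
  have hR0 : 0 < R := (zero_le).trans_lt hR
  obtain ⟨R₁, hr1, h1R⟩ := exists_between hR
  have hR10 : 0 < R₁ := (zero_le).trans_lt hr1
  have huniq : ∀ z : ℂ, ∀ a b : E, a - z • T a = y → b - z • T b = y → a = b := by
    intro z a b ha hb
    have h1 : (a - b) = z • T (a - b) := by
      rw [map_sub, smul_sub, ← sub_eq_zero]
      have := sub_eq_zero.2 (ha.trans hb.symm)
      rw [← this]; abel
    by_cases hz : z = 0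
    · rw [hz, zero_smul] at h1
      exact sub_eq_zero.1 h1
    · refine sub_eq_zero.1 (hinj z⁻¹ _ ?_)
      nth_rw 2 [h1]
      rw [smul_smul, inv_mul_cancel₀ hz, one_smul]
  -- local solutions
  have hloc : ∀ z ∈ Metric.closedBall (0 : ℂ) (R₁⁻¹ : ℝ≥0), ∃ g : ℂ → E, DifferentiableAt ℂ g z ∧
      ∀ᶠ w in 𝓝 z, g w - w • T (g w) = y := by
    intro z hz
    by_cases hz0 : z = 0
    · subst hz0
      refine ⟨fun w => Ring.inverse (1 - w • T) y, ?_, ?_⟩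
      · have h1 := (spectrum.hasFPowerSeriesOnBall_inverse_one_sub_smul ℂ T).analyticAt.differentiableAt
        exact h1.clm_apply (differentiableAt_const y)
      · have hc : Tendsto (fun w : ℂ => 1 - w • T) (𝓝 0) (𝓝 (1 : E →L[ℂ] E)) := by
          have : Continuous fun w : ℂ => 1 - w • T := by fun_prop
          simpa using this.tendsto 0
        have := hc (Units.isOpen.mem_nhds (isUnit_one))
        filter_upwards [this] with w hw
        have h2 := Ring.mul_inverse_cancel _ hw
        have h3 := congrArg (fun L : E →L[ℂ] E => L y) h2
        simpa using h3
    · have hl : z⁻¹ ∈ localResolventSet T y := by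
        by_contra hcon
        have h1 := hy hcon
        rw [mem_closedBall_zero_iff, norm_inv] at h1
        rw [mem_closedBall_zero_iff] at hz
        have h2 : (R₁ : ℝ) ≤ ‖z‖⁻¹ := by
          rw [le_inv_comm₀ (by exact_mod_cast hR10) (norm_pos_iff.2 hz0)]
          simpa using hz
        have h3 : (r : ℝ) < R₁ := hr1
        linarith
      obtain ⟨U, hU, hzU, f, hf, hfe⟩ := hl
      refine ⟨fun w => -(w⁻¹ • f w⁻¹), ?_, ?_⟩
      · have h1 := (hf _ hzU).differentiableAt
        have h2 := differentiableAt_inv (𝕜 := ℂ) hz0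
        exact (h2.smul (DifferentiableAt.comp (f := fun w : ℂ => w⁻¹) z h1 h2)).neg
      · have h2 : ContinuousAt (fun w : ℂ => w⁻¹) z := continuousAt_inv₀ hz0
        filter_upwards [h2 (hU.mem_nhds hzU), isOpen_ne.mem_nhds hz0] with w hw hw0
        have h3 := hfe _ hw
        have hw0 : w ≠ 0 := hw0
        rw [map_neg, map_smul, smul_neg, smul_smul, mul_inv_cancel₀ hw0, one_smul, ← h3]
        abel
  classical
  let h : ℂ → E := fun z => if hz : ∃ a, a - z • T a = y then hz.choose else 0
  have hh : ∀ z a, a - z • T a = y → h z = a := by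
    intro z a ha
    have hz : ∃ a, a - z • T a = y := ⟨a, ha⟩
    have : h z = hz.choose := dif_pos hz
    rw [this]
    exact huniq z _ _ hz.choose_spec ha
  have hdiff : DifferentiableOn ℂ h (Metric.closedBall (0 : ℂ) (R₁⁻¹ : ℝ≥0)) := by
    intro z hz
    obtain ⟨g, hg, hge⟩ := hloc z hz
    refine (hg.congr_of_eventuallyEq ?_).differentiableWithinAt
    filter_upwards [hge] with w hw using hh w _ hw
  have hps := hdiff.hasFPowerSeriesOnBall (inv_pos.2 hR10)
  have hps2 := (ContinuousLinearMap.apply ℂ E y).comp_hasFPowerSeriesOnBall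
    (spectrum.hasFPowerSeriesOnBall_inverse_one_sub_smul ℂ T)
  have hev : (⇑(ContinuousLinearMap.apply ℂ E y) ∘ fun z : ℂ => Ring.inverse (1 - z • T))
      =ᶠ[𝓝 0] h := by
    have hc : Tendsto (fun w : ℂ => 1 - w • T) (𝓝 0) (𝓝 (1 : E →L[ℂ] E)) := by
      have : Continuous fun w : ℂ => 1 - w • T := by fun_prop
      simpa using this.tendsto 0
    have := hc (Units.isOpen.mem_nhds (isUnit_one))
    filter_upwards [this] with w hw
    have h2 := Ring.mul_inverse_cancel _ hw
    have h3 := congrArg (fun L : E →L[ℂ] E => L y) h2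
    symm
    apply hh
    simpa using h3
  have heq := hps.hasFPowerSeriesAt.eq_formalMultilinearSeries
    (hps2.hasFPowerSeriesAt.congr hev)
  have hlt : ((R⁻¹ : ℝ≥0) : ℝ≥0∞) < (cauchyPowerSeries h 0 (R₁⁻¹ : ℝ≥0)).radius := by
    refine lt_of_lt_of_le ?_ hps.r_le
    exact_mod_cast inv_strictAnti₀ hR10 h1R
  obtain ⟨C, hC0, hC⟩ := FormalMultilinearSeries.norm_mul_pow_le_of_lt_radius _ hlt
  refine ⟨C, fun n => ?_⟩
  have h1 := hC n
  rw [heq] at h1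
  have h2 := ContinuousMultilinearMap.le_opNorm
    (((ContinuousLinearMap.apply ℂ E y).compFormalMultilinearSeries
      (fun n => ContinuousMultilinearMap.mkPiRing ℂ (Fin n) (T ^ n))) n) (fun _ => (1 : ℂ))
  simp only [Finset.prod_const_one, norm_one, mul_one] at h2
  have h3 : (((ContinuousLinearMap.apply ℂ E y).compFormalMultilinearSeries
      (fun n => ContinuousMultilinearMap.mkPiRing ℂ (Fin n) (T ^ n))) n) (fun _ => (1 : ℂ))
      = (T ^ n) y := by
    change (ContinuousMultilinearMap.mkPiRing ℂ (Fin n) (T ^ n) (fun _ => (1 : ℂ))) y = _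
    simp
  rw [h3] at h2
  rw [NNReal.coe_inv, inv_pow, mul_inv_le_iff₀ (by positivity)] at h1
  exact h2.trans h1

end Abs

section Sh
variable {H : Type*} [NormedAddCommGroup H] [InnerProductSpace ℂ H] [CompleteSpace H]

theorem aux_shift_inj (A : ℕ → (H →L[ℂ] H)ˣ)
    (S : lp (fun _ : ℕ => H) 2 →L[ℂ] lp (fun _ : ℕ => H) 2)
    (hS0 : ∀ x : lp (fun _ : ℕ => H) 2, S x 0 = 0)
    (hS : ∀ (x : lp (fun _ : ℕ => H) 2) (n : ℕ), S x (n + 1) = (A n : H →L[ℂ] H) (x n))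
    (m : ℂ) (x : lp (fun _ : ℕ => H) 2) (hx : S x = m • x) : x = 0 := by
  have h0 : ∀ n, S x n = m • x n := fun n => by rw [hx]; rfl
  have hinj : ∀ n (v : H), (A n : H →L[ℂ] H) v = 0 → v = 0 := by
    intro n v hv
    have h1 := congrArg (fun L : H →L[ℂ] H => L v) (A n).inv_mul
    simp only [ContinuousLinearMap.mul_apply, hv, map_zero, ContinuousLinearMap.one_apply] at h1
    exact h1.symm
  have key : ∀ n, x n = 0 := by
    by_cases hm : m = 0
    · intro n
      apply hinj n
      rw [← hS, h0, hm, zero_smul]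
    · intro n
      induction n with
      | zero =>
        have := h0 0
        rw [hS0] at this
        exact (smul_eq_zero.1 this.symm).resolve_left hm
      | succ n ih =>
        have := h0 (n + 1)
        rw [hS, ih, map_zero] at this
        exact (smul_eq_zero.1 this.symm).resolve_left hm
  ext n
  rw [key n]; rfl

theorem aux_shift_single (A : ℕ → (H →L[ℂ] H)ˣ)
    (S : lp (fun _ : ℕ => H) 2 →L[ℂ] lp (fun _ : ℕ => H) 2)
    (hS0 : ∀ x : lp (fun _ : ℕ => H) 2, S x 0 = 0)
    (hS : ∀ (x : lp (fun _ : ℕ => H) 2) (n : ℕ), S x (n + 1) = (A n : H →L[ℂ] H) (x n))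
    (k : ℕ) (v : H) :
    S (lp.single 2 k v) = lp.single 2 (k + 1) ((A k : H →L[ℂ] H) v) := by
  ext n
  cases n with
  | zero => rw [hS0, lp.single_apply_ne _ _ _ (by omega)]
  | succ n =>
    rw [hS]
    by_cases h : n = k
    · subst h
      rw [lp.single_apply_self, lp.single_apply_self]
    · rw [lp.single_apply_ne _ _ _ h, lp.single_apply_ne _ _ _ (by omega), map_zero]

theorem aux_shift_pow (A : ℕ → (H →L[ℂ] H)ˣ)
    (S : lp (fun _ : ℕ => H) 2 →L[ℂ] lp (fun _ : ℕ => H) 2)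
    (hS0 : ∀ x : lp (fun _ : ℕ => H) 2, S x 0 = 0)
    (hS : ∀ (x : lp (fun _ : ℕ => H) 2) (n : ℕ), S x (n + 1) = (A n : H →L[ℂ] H) (x n))
    (n k : ℕ) (x : H) :
    (S ^ n) (lp.single 2 k ((wB A k : H →L[ℂ] H) x))
      = lp.single 2 (n + k) ((wB A (n + k) : H →L[ℂ] H) x) := by
  induction n with
  | zero => simp
  | succ n ih =>
    rw [pow_succ', ContinuousLinearMap.mul_apply, ih, aux_shift_single A S hS0 hS,
      show n + 1 + k = (n + k) + 1 by omega]
    rfl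

theorem aux_norm_pow (A : ℕ → (H →L[ℂ] H)ˣ)
    (S : lp (fun _ : ℕ => H) 2 →L[ℂ] lp (fun _ : ℕ => H) 2)
    (hS0 : ∀ x : lp (fun _ : ℕ => H) 2, S x 0 = 0)
    (hS : ∀ (x : lp (fun _ : ℕ => H) 2) (n : ℕ), S x (n + 1) = (A n : H →L[ℂ] H) (x n))
    (n k : ℕ) (x : H) :
    ‖(S ^ n) (lp.single 2 k ((wB A k : H →L[ℂ] H) x))‖ = ‖(wB A (n + k) : H →L[ℂ] H) x‖ := by
  rw [aux_shift_pow A S hS0 hS, lp.norm_single (by norm_num)]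

theorem aux_mem (A : ℕ → (H →L[ℂ] H)ˣ)
    (S : lp (fun _ : ℕ => H) 2 →L[ℂ] lp (fun _ : ℕ => H) 2)
    (hS0 : ∀ x : lp (fun _ : ℕ => H) 2, S x 0 = 0)
    (hS : ∀ (x : lp (fun _ : ℕ => H) 2) (n : ℕ), S x (n + 1) = (A n : H →L[ℂ] H) (x n))
    (k : ℕ) (x : H) (r : ℝ≥0)
    (hr : limsup (fun n : ℕ => (‖(wB A n : H →L[ℂ] H) x‖₊ : ℝ≥0∞) ^ (1 / n : ℝ)) atTop ≤ r) :
    lp.single 2 k ((wB A k : H →L[ℂ] H) x) ∈ growthSub S r := by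
  intro R hR
  obtain ⟨C, hC⟩ := aux_bound_s18 (R := R) (a := fun n => ‖(wB A n : H →L[ℂ] H) x‖₊)
    (hr.trans_lt (by exact_mod_cast hR))
  refine ⟨C * (R : ℝ) ^ k, fun n => ?_⟩
  rw [aux_norm_pow A S hS0 hS]
  have h1 : ‖(wB A (n + k) : H →L[ℂ] H) x‖ ≤ C * (R : ℝ) ^ (n + k) := hC (n + k)
  refine h1.trans (le_of_eq ?_)
  ring

theorem aux_wB_ne (A : ℕ → (H →L[ℂ] H)ˣ) (k : ℕ) (x : H) (hx : x ≠ 0) :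
    (wB A k : H →L[ℂ] H) x ≠ 0 := by
  intro hv
  have h1 := congrArg (fun L : H →L[ℂ] H => L x) (wB A k).inv_mul
  simp only [ContinuousLinearMap.mul_apply, hv, map_zero, ContinuousLinearMap.one_apply] at h1
  exact hx h1.symm

end Sh

theorem stmt18 {H : Type*} [NormedAddCommGroup H] [InnerProductSpace ℂ H] [CompleteSpace H]
    (A : ℕ → (H →L[ℂ] H)ˣ)
    (hbdd : ∃ C : ℝ, ∀ n, ‖(A n : H →L[ℂ] H)‖ ≤ C)
    (S : lp (fun _ : ℕ => H) 2 →L[ℂ] lp (fun _ : ℕ => H) 2)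
    (hS0 : ∀ x : lp (fun _ : ℕ => H) 2, S x 0 = 0)
    (hS : ∀ (x : lp (fun _ : ℕ => H) 2) (n : ℕ), S x (n + 1) = (A n : H →L[ℂ] H) (x n))
    (hC : DunfordC S) :
    spectralRadius ℂ S = R3plus A ∧
    ∀ x : H, x ≠ 0 →
      Tendsto (fun n : ℕ =>
          (⨆ k : ℕ, (‖(wB A (n + k) : H →L[ℂ] H) x‖₊ : ℝ≥0∞) /
            (‖(wB A k : H →L[ℂ] H) x‖₊ : ℝ≥0∞)) ^ (1 / n : ℝ))
        atTop
        (𝓝 (limsup (fun n : ℕ =>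
          (‖(wB A n : H →L[ℂ] H) x‖₊ : ℝ≥0∞) ^ (1 / n : ℝ)) atTop)) := by
  have hcl : ∀ r : ℝ≥0, IsClosed (growthSub S r : Set (lp (fun _ : ℕ => H) 2)) := by
    intro r
    have h1 := hC (Metric.closedBall 0 r) Metric.isClosed_closedBall
    convert h1 using 1
    ext y
    exact ⟨fun h => aux_a S r h, fun h => aux_b S (aux_shift_inj A S hS0 hS) r h⟩
  have hgel := spectrum.pow_nnnorm_pow_one_div_tendsto_nhds_spectralRadius S
  have hle : ∀ x : H, limsup (fun n : ℕ =>
      (‖(wB A n : H →L[ℂ] H) x‖₊ : ℝ≥0∞) ^ (1 / n : ℝ)) atTop ≤ spectralRadius ℂ S := by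
    intro x
    refine aux_le_of_nnreal fun R hR => ?_
    rw [← hgel.limsup_eq] at hR
    obtain ⟨C, hC⟩ := aux_bound_s18 hR
    refine aux_limsup_le (C := C * ‖x‖₊) fun n => ?_
    have h1 : ‖(wB A n : H →L[ℂ] H) x‖ ≤ (C * ‖x‖) * (R : ℝ) ^ n := by
      have h2 := aux_norm_pow A S hS0 hS n 0 x
      rw [add_zero] at h2
      rw [← h2]
      refine ((S ^ n).le_opNorm _).trans ?_
      rw [lp.norm_single (by norm_num)]
      have h3 : ‖S ^ n‖ ≤ C * (R : ℝ) ^ n := hC n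
      have h4 : ((wB A 0 : (H →L[ℂ] H)ˣ) : H →L[ℂ] H) x = x := rfl
      rw [h4]
      calc ‖S ^ n‖ * ‖x‖ ≤ (C * (R : ℝ) ^ n) * ‖x‖ := by gcongr
        _ = _ := by ring
    have h5 : ‖(wB A n : H →L[ℂ] H) x‖₊ ≤ (C * ‖x‖₊) * R ^ n := h1
    exact_mod_cast h5
  have htop : spectralRadius ℂ S < ⊤ := by
    have h1 : limsup (fun n : ℕ => (‖S ^ n‖₊ : ℝ≥0∞) ^ (1 / n : ℝ)) atTop
        ≤ ((‖S‖₊ + 1 : ℝ≥0) : ℝ≥0∞) := by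
      refine aux_limsup_le (C := ‖(1 : lp (fun _ : ℕ => H) 2 →L[ℂ] lp (fun _ : ℕ => H) 2)‖₊ + 1)
        fun n => ?_
      have h2 : ‖S ^ n‖ ≤ (‖(1 : lp (fun _ : ℕ => H) 2 →L[ℂ] lp (fun _ : ℕ => H) 2)‖ + 1)
          * (‖S‖ + 1) ^ n := by
        induction n with
        | zero => simp
        | succ n ih =>
          rw [pow_succ, pow_succ, ← mul_assoc]
          refine (norm_mul_le _ _).trans (mul_le_mul ih (by linarith) (norm_nonneg _)
            (by positivity))
      have h3 : ‖S ^ n‖₊ ≤ (‖(1 : lp (fun _ : ℕ => H) 2 →L[ℂ] lp (fun _ : ℕ => H) 2)‖₊ + 1)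
          * (‖S‖₊ + 1) ^ n := h2
      exact_mod_cast h3
    rw [hgel.limsup_eq] at h1
    exact h1.trans_lt ENNReal.coe_lt_top
  refine ⟨le_antisymm ?_ (iSup₂_le fun x _ => hle x), ?_⟩
  · have hR3 : R3plus A ≤ spectralRadius ℂ S := iSup₂_le fun x _ => hle x
    obtain ⟨r, hr⟩ : ∃ r : ℝ≥0, (r : ℝ≥0∞) = _ := ⟨_, ENNReal.coe_toNNReal (hR3.trans_lt htop).ne⟩
    have hmem : ∀ (k : ℕ) (v : H), lp.single 2 k v ∈ growthSub S r := by
      intro k v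
      by_cases hv : v = 0
      · rw [hv, lp.single_zero]; exact Submodule.zero_mem _
      have h1 : (wB A k : H →L[ℂ] H) (wBi A k v) = v := by
        have h1 := congrArg (fun L : H →L[ℂ] H => L v) (wB A k).mul_inv
        exact h1
      have h2 : wBi A k v ≠ 0 := by
        intro h
        rw [h, map_zero] at h1
        exact hv h1.symm
      rw [← h1]
      apply aux_mem A S hS0 hS
      rw [hr]
      exact le_iSup₂ (f := fun (x : H) (_ : x ≠ 0) => limsup (fun n : ℕ =>
        (‖(wB A n : H →L[ℂ] H) x‖₊ : ℝ≥0∞) ^ (1 / n : ℝ)) atTop) _ h2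
    have hall : ∀ y, y ∈ growthSub S r := by
      intro y
      have h1 := lp.hasSum_single (p := 2) (by norm_num) y
      exact (hcl r).mem_of_tendsto h1 (Eventually.of_forall fun s =>
        Submodule.sum_mem _ fun i _ => hmem i _)
    rw [← hr]
    refine aux_le_of_nnreal fun R hR => ?_
    obtain ⟨C, hC⟩ := aux_ub S r (hcl r) R (by exact_mod_cast hR)
    rw [← hgel.limsup_eq]
    refine aux_limsup_le (C := C) fun n => ?_
    have h1 : ‖S ^ n‖ ≤ C * (R : ℝ) ^ n :=
      ContinuousLinearMap.opNorm_le_bound _ (by positivity) fun y => hC n y (hall y)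
    have h2 : ‖S ^ n‖₊ ≤ C * R ^ n := h1
    exact_mod_cast h2
  · intro x hx
    obtain ⟨r, hr⟩ : ∃ r : ℝ≥0, (r : ℝ≥0∞) = _ := ⟨_, ENNReal.coe_toNNReal ((hle x).trans_lt htop).ne⟩
    have hne : ∀ k, (‖(wB A k : H →L[ℂ] H) x‖₊ : ℝ≥0∞) ≠ 0 := fun k => by
      simpa using aux_wB_ne A k x hx
    refine tendsto_of_le_liminf_of_limsup_le ?_ ?_
    · refine le_liminf_of_le (by isBoundedDefault) ?_
      filter_upwards [eventually_gt_atTop 0] with n hn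
      by_contra hcon
      rw [not_le] at hcon
      obtain ⟨q, hq1, hq2⟩ := ENNReal.lt_iff_exists_nnreal_btwn.1 hcon
      have hn0 : (n : ℝ) ≠ 0 := by positivity
      have h3 := ENNReal.rpow_le_rpow (z := n) hq1.le (by positivity)
      rw [← ENNReal.rpow_mul, one_div_mul_cancel hn0, ENNReal.rpow_one,
        ENNReal.rpow_natCast] at h3
      have hq0 : 0 < q := by
        have := (zero_le).trans_lt hq1
        exact_mod_cast this
      have h4 : ∀ k, ‖(wB A (n + k) : H →L[ℂ] H) x‖₊ ≤ q ^ n * ‖(wB A k : H →L[ℂ] H) x‖₊ := by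
        intro k
        have h5 := (le_iSup (fun k : ℕ => (‖(wB A (n + k) : H →L[ℂ] H) x‖₊ : ℝ≥0∞) /
            (‖(wB A k : H →L[ℂ] H) x‖₊ : ℝ≥0∞)) k).trans h3
        rw [ENNReal.div_le_iff (hne k) ENNReal.coe_ne_top] at h5
        exact_mod_cast h5
      have h6 : ∀ j, ‖(wB A j : H →L[ℂ] H) x‖₊ ≤
          (∑ i ∈ Finset.range n, ‖(wB A i : H →L[ℂ] H) x‖₊ / q ^ i) * q ^ j := by
        intro j
        induction j using Nat.strong_induction_on with
        | _ j ih =>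
          by_cases hj : j < n
          · rw [← div_le_iff₀ (pow_pos hq0 j)]
            exact Finset.single_le_sum (f := fun i => ‖(wB A i : H →L[ℂ] H) x‖₊ / q ^ i)
              (fun i _ => zero_le) (Finset.mem_range.2 hj)
          · obtain ⟨k, rfl⟩ := Nat.exists_eq_add_of_le (not_lt.1 hj)
            refine (h4 k).trans ?_
            refine (mul_le_mul_right (ih k (by omega)) _).trans (le_of_eq ?_)
            ring
      refine absurd hq2 (not_lt.2 (aux_limsup_le
        (C := ∑ i ∈ Finset.range n, ‖(wB A i : H →L[ℂ] H) x‖₊ / q ^ i) fun j => ?_))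
      rw [← ENNReal.coe_pow, ← ENNReal.coe_mul, ENNReal.coe_le_coe]
      exact h6 j
    · rw [← hr]
      refine aux_le_of_nnreal fun R hR => ?_
      obtain ⟨C, hC⟩ := aux_ub S r (hcl r) R (by exact_mod_cast hR)
      refine aux_limsup_le (C := C) fun n => iSup_le fun k => ?_
      rw [ENNReal.div_le_iff (hne k) ENNReal.coe_ne_top]
      have h1 := hC n _ (aux_mem A S hS0 hS k x r hr.ge)
      rw [aux_norm_pow A S hS0 hS, lp.norm_single (by norm_num)] at h1
      have h2 : ‖(wB A (n + k) : H →L[ℂ] H) x‖₊ ≤ C * R ^ n * ‖(wB A k : H →L[ℂ] H) x‖₊ := h1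
      exact_mod_cast h2
end
end
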